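/- Let A = ℚ[t₁] ⊗ Λ(v₁,…,v₅) with deg v₁ = deg v₂ = deg v₃ = 3 and deg v₄ = deg v₅ = 7, and let D be the unique derivation of degree +1 on A with D t₁ = 0, D v₁ = D v₂ = D v₃ = 0, D v₄ = v₁v₂t₁ + t₁⁴ and D v₅ = v₁v₃t₁. Then D ∘ D = 0 and dim_ℚ H(A, D) < ∞. -/

import Mathlib

/-!
For a derivation `D` of degree one, the kernel of `D ∘ D` is stable under left
multiplication by any homogeneous `g` with `D (D g) = 0`; since the kernel contains `1` and the
algebra is generated by the `tᵢ` and `vⱼ`, it suffices to check `D (D g) = 0` on generators.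

For finiteness, put `x = v₁v₂t₁`. Then `x² = 0` and `x`, `t₁` are cocycles, so
`(t₁⁴ + x)(t₁⁴ - x) = t₁⁸` shows that every cocycle `z` satisfies
`t₁⁸ z = D (v₄ (t₁⁴ - x) z)`: multiplication by `t₁⁸` kills cohomology. Since `A` is free over
`ℚ[t₁]`, multiplication by `t₁` is injective on `A`, so any cocycle divisible by `t₁⁸` in `A` is
`t₁⁸` times a cocycle, hence exact. Therefore `H(A, D)` is a subquotient of `A / t₁⁸ A`, which is
finite-dimensional because the exterior algebra is.
-/

/- D v₄ = v₁v₂t₁ + t₁⁴, D v₅ = v₁v₃t₁ on ℚ[t₁] ⊗ Λ(v₁,…,v₅), deg v = (3,3,3,7,7). -/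

open scoped TensorProduct

set_option synthInstance.maxHeartbeats 1000000
set_option maxHeartbeats 1000000

noncomputable section

/-- The free graded-commutative ℚ-algebra `ℚ[t₁,…,t_r] ⊗ Λ(v₁,…,v_n)`:
the tensor product of a polynomial algebra on `r` generators of degree 2 with
an exterior algebra on `n` generators of odd degrees. -/
abbrev FGCA (r n : ℕ) : Type :=
  MvPolynomial (Fin r) ℚ ⊗[ℚ] ExteriorAlgebra ℚ (Fin n → ℚ)

/-- The degree-2 polynomial generators `tᵢ`. -/
def tg (r n : ℕ) (i : Fin r) : FGCA r n := (MvPolynomial.X i) ⊗ₜ 1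

/-- The odd-degree exterior generators `vⱼ`. -/
def vg (r n : ℕ) (j : Fin n) : FGCA r n :=
  1 ⊗ₜ (ExteriorAlgebra.ι ℚ (Pi.single j (1 : ℚ)))

/-- The monomial `t^α · v_S` (with the exterior factors multiplied in increasing
order of index).  These monomials form a ℚ-basis of `FGCA r n`. -/
def gmon (r n : ℕ) (α : Fin r →₀ ℕ) (S : Finset (Fin n)) : FGCA r n :=
  (MvPolynomial.monomial α (1 : ℚ)) ⊗ₜ
    ((S.sort (· ≤ ·)).map fun j => ExteriorAlgebra.ι ℚ (Pi.single j (1 : ℚ))).prod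

/-- The (cohomological) degree of the monomial `t^α · v_S`, where each `tᵢ` has
degree `2` and each `vⱼ` has degree `dv j`. -/
def gdeg (r n : ℕ) (dv : Fin n → ℕ) (α : Fin r →₀ ℕ) (S : Finset (Fin n)) : ℕ :=
  (α.sum fun _ k => 2 * k) + S.sum dv

/-- The homogeneous part of degree `k` of `FGCA r n`: the span of the monomials
of degree `k`. -/
def homog (r n : ℕ) (dv : Fin n → ℕ) (k : ℕ) : Submodule ℚ (FGCA r n) :=
  Submodule.span ℚ { a | ∃ α S, gdeg r n dv α S = k ∧ a = gmon r n α S }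

/-- The graded Leibniz rule for a degree `+1` derivation `D`:
`D(ab) = D(a)·b + (−1)^(deg a) a·D(b)` for homogeneous `a`. -/
def IsLeibniz (r n : ℕ) (dv : Fin n → ℕ) (D : FGCA r n →ₗ[ℚ] FGCA r n) : Prop :=
  ∀ (p : ℕ) (a b : FGCA r n), a ∈ homog r n dv p →
    D (a * b) = D a * b + ((-1 : ℚ) ^ p) • (a * D b)

/-- `D` raises (cohomological) degree by `1`. -/
def RaisesDegByOne (r n : ℕ) (dv : Fin n → ℕ) (D : FGCA r n →ₗ[ℚ] FGCA r n) : Prop :=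
  ∀ (k : ℕ), ∀ a ∈ homog r n dv k, D a ∈ homog r n dv (k + 1)

/-- The cohomology `H(A, D) = ker D / im D` as a ℚ-vector space, realized as the
image of `ker D` in `A ⧸ im D`. -/
abbrev Cohomology (r n : ℕ) (D : FGCA r n →ₗ[ℚ] FGCA r n) : Type :=
  (LinearMap.ker D).map (LinearMap.range D).mkQ

end

noncomputable section

/-! ### Generators of the algebra -/

/-- Induction principle: a subspace that contains `1` and is stable under left multiplication by
the generators is everything. -/
lemma fgca_eq_top (r n : ℕ) (K : Submodule ℚ (FGCA r n)) (h1 : 1 ∈ K)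
    (ht : ∀ i, ∀ a ∈ K, tg r n i * a ∈ K) (hv : ∀ j, ∀ a ∈ K, vg r n j * a ∈ K) : K = ⊤ := by
  have hE : ∀ e : ExteriorAlgebra ℚ (Fin n → ℚ),
      ((1 : MvPolynomial (Fin r) ℚ) ⊗ₜ[ℚ] e : FGCA r n) ∈ K := by
    intro e
    induction e using CliffordAlgebra.left_induction with
    | algebraMap q =>
      rw [Algebra.algebraMap_eq_smul_one, TensorProduct.tmul_smul]
      exact K.smul_mem _ h1
    | add x y hx hy =>
      rw [TensorProduct.tmul_add]
      exact K.add_mem hx hy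
    | ι_mul x m hx =>
      have hm : ((1 : MvPolynomial (Fin r) ℚ) ⊗ₜ[ℚ]
          (ExteriorAlgebra.ι ℚ m * x) : FGCA r n) = ∑ j, m j • (vg r n j * (1 ⊗ₜ[ℚ] x)) := by
        conv_lhs => rw [pi_eq_sum_univ' m]
        rw [map_sum, Finset.sum_mul, TensorProduct.tmul_sum]
        refine Finset.sum_congr rfl fun j _ => ?_
        rw [map_smul, smul_mul_assoc, TensorProduct.tmul_smul, vg,
          Algebra.TensorProduct.tmul_mul_tmul, one_mul]
      change ((1 : MvPolynomial (Fin r) ℚ) ⊗ₜ[ℚ] (ExteriorAlgebra.ι ℚ m * x) : FGCA r n) ∈ K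
      rw [hm]
      exact K.sum_mem fun j _ => K.smul_mem _ (hv j _ hx)
  rw [eq_top_iff]
  rintro a -
  induction a using TensorProduct.induction_on with
  | zero => exact K.zero_mem
  | add x y hx hy => exact K.add_mem hx hy
  | tmul p e =>
    induction p using MvPolynomial.induction_on with
    | C q =>
      rw [← MvPolynomial.algebraMap_eq, Algebra.algebraMap_eq_smul_one, ← TensorProduct.smul_tmul']
      exact K.smul_mem _ (hE e)
    | add p q hp hq =>
      rw [TensorProduct.add_tmul]
      exact K.add_mem hp hq
    | mul_X p i hp =>
      have := ht i _ hp
      rwa [tg, Algebra.TensorProduct.tmul_mul_tmul, one_mul, mul_comm] at this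

lemma tg_mem_homog (r n : ℕ) (dv : Fin n → ℕ) (i : Fin r) : tg r n i ∈ homog r n dv 2 :=
  Submodule.subset_span ⟨Finsupp.single i 1, ∅, by simp [gdeg], by
    simp [gmon, tg, MvPolynomial.X]⟩

lemma vg_mem_homog (r n : ℕ) (dv : Fin n → ℕ) (j : Fin n) : vg r n j ∈ homog r n dv (dv j) :=
  Submodule.subset_span ⟨0, {j}, by simp [gdeg], by
    simp [gmon, vg]⟩

lemma neg_one_smul_fgca (r n : ℕ) (a : FGCA r n) : (-1 : ℚ) • a = -a :=
  neg_one_smul ℚ a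

lemma tg_comm (r n : ℕ) (i : Fin r) (a : FGCA r n) : a * tg r n i = tg r n i * a := by
  induction a using TensorProduct.induction_on with
  | zero => simp
  | add x y hx hy => rw [add_mul, mul_add, hx, hy]
  | tmul p e => simp [tg, mul_comm]

lemma vg_mul_vg_mul_self (r n : ℕ) (i j : Fin n) : vg r n i * vg r n j * vg r n i = 0 := by
  have h := ExteriorAlgebra.ι_add_mul_swap (R := ℚ)
    (Pi.single j (1 : ℚ) : Fin n → ℚ) (Pi.single i 1)
  simp only [vg, Algebra.TensorProduct.tmul_mul_tmul]
  rw [mul_assoc (ExteriorAlgebra.ι ℚ (Pi.single i (1 : ℚ) : Fin n → ℚ)), eq_neg_of_add_eq_zero_left h,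
    mul_neg, ← mul_assoc, ExteriorAlgebra.ι_sq_zero]
  simp

/-! ### The square of a derivation of odd degree -/

/-- The kernel of `D ∘ D` is stable under left multiplication by the homogeneous elements in it:
the cross terms `D g * D a` cancel because `D g` and `g` have opposite parity. -/
lemma sq_mul_eq_zero {r n : ℕ} {dv : Fin n → ℕ} {D : FGCA r n →ₗ[ℚ] FGCA r n}
    (hLeib : IsLeibniz r n dv D) (hdeg : RaisesDegByOne r n dv D) {p : ℕ} {g a : FGCA r n}
    (hg : g ∈ homog r n dv p) (hDg : D (D g) = 0) (ha : D (D a) = 0) : D (D (g * a)) = 0 := by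
  rw [hLeib p g a hg, map_add, map_smul, hLeib (p + 1) (D g) a (hdeg p g hg),
    hLeib p g (D a) hg, hDg, ha, pow_succ, mul_neg_one, zero_mul, zero_add, mul_zero, smul_zero,
    add_zero]
  exact (congrArg (· + _) (neg_smul _ _)).trans (neg_add_cancel _)

lemma sq_eq_zero {r n : ℕ} {dv : Fin n → ℕ} {D : FGCA r n →ₗ[ℚ] FGCA r n}
    (hLeib : IsLeibniz r n dv D) (hdeg : RaisesDegByOne r n dv D)
    (ht : ∀ i, D (D (tg r n i)) = 0) (hv : ∀ j, D (D (vg r n j)) = 0) : D ∘ₗ D = 0 := by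
  have h1 : D 1 = 0 := by
    have h := hLeib 0 1 1 (Submodule.subset_span ⟨0, ∅, by simp [gdeg], by
      simp [gmon, Algebra.TensorProduct.one_def]⟩)
    simpa using h
  rw [← LinearMap.ker_eq_top]
  refine fgca_eq_top r n _ ?_ (fun i a ha => ?_) fun j a ha => ?_
  · simp [h1]
  · exact sq_mul_eq_zero hLeib hdeg (tg_mem_homog r n dv i) (ht i) ha
  · exact sq_mul_eq_zero hLeib hdeg (vg_mem_homog r n dv j) (hv j) ha

/-! ### Multiplication by the polynomial generator -/

/-- `A` is free over the polynomial ring, so multiplication by a polynomial generator is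
injective. -/
lemma tg_mul_injective (r n : ℕ) (i : Fin r) : Function.Injective (tg r n i * ·) := by
  have h : Function.Injective (LinearMap.mulLeft ℚ (MvPolynomial.X i : MvPolynomial (Fin r) ℚ)) :=
    fun a b hab => mul_left_cancel₀ (MvPolynomial.X_ne_zero i) hab
  have h2 := Module.Flat.rTensor_preserves_injective_linearMap
    (M := ExteriorAlgebra ℚ (Fin n → ℚ)) _ h
  have h3 : ∀ a : FGCA r n, tg r n i * a = LinearMap.rTensor (ExteriorAlgebra ℚ (Fin n → ℚ))
      (LinearMap.mulLeft ℚ (MvPolynomial.X i : MvPolynomial (Fin r) ℚ)) a := by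
    intro a
    induction a using TensorProduct.induction_on with
    | zero => simp
    | add x y hx hy => rw [mul_add, map_add, hx, hy]
    | tmul p e => simp [tg]
  intro a b hab
  simp only [h3] at hab
  exact h2 hab

lemma tg_pow_mul_injective (r n : ℕ) (i : Fin r) (m : ℕ) :
    Function.Injective (tg r n i ^ m * ·) := by
  rw [← mul_left_iterate]
  exact (tg_mul_injective r n i).iterate m

/-- With a single polynomial generator `t`, the quotient `A / tᵐ A` is finite-dimensional: it is
spanned by the classes of `tᵏ ⊗ e` with `k < m`. -/
lemma finite_quotient_tg_pow (n m : ℕ) :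
    Module.Finite ℚ (FGCA 1 n ⧸ LinearMap.range (LinearMap.mulLeft ℚ (tg 1 n 0 ^ m))) := by
  have : Module.Finite ℚ (ExteriorAlgebra ℚ (Fin n → ℚ)) :=
    Module.Finite.of_basis (Pi.basisFun ℚ (Fin n)).ExteriorAlgebra
  let f : (Fin m → ExteriorAlgebra ℚ (Fin n → ℚ)) →ₗ[ℚ] FGCA 1 n :=
    ∑ k : Fin m, (TensorProduct.mk ℚ (MvPolynomial (Fin 1) ℚ) (ExteriorAlgebra ℚ (Fin n → ℚ))
      (MvPolynomial.X 0 ^ (k : ℕ))) ∘ₗ LinearMap.proj k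
  have hf : ∀ e, f e = ∑ k : Fin m, (MvPolynomial.X 0 ^ (k : ℕ)) ⊗ₜ[ℚ] e k := by
    intro e
    simp [f]
  refine Module.Finite.of_surjective ((LinearMap.range
    (LinearMap.mulLeft ℚ (tg 1 n 0 ^ m))).mkQ ∘ₗ f) ?_
  rw [← LinearMap.range_eq_top, LinearMap.range_comp]
  set B := LinearMap.range (LinearMap.mulLeft ℚ (tg 1 n 0 ^ m))
  suffices h : LinearMap.range f ⊔ B = ⊤ by
    have h2 := congrArg (Submodule.map B.mkQ) h
    rwa [Submodule.map_sup, Submodule.mkQ_map_self, sup_bot_eq, Submodule.map_top,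
      Submodule.range_mkQ] at h2
  rw [eq_top_iff]
  rintro a -
  induction a using TensorProduct.induction_on with
  | zero => exact Submodule.zero_mem _
  | add x y hx hy => exact Submodule.add_mem _ hx hy
  | tmul p e =>
    induction p using MvPolynomial.induction_on' with
    | add p q hp hq =>
      rw [TensorProduct.add_tmul]
      exact Submodule.add_mem _ hp hq
    | monomial u q =>
      have hu : MvPolynomial.monomial u q
          = q • (MvPolynomial.X 0 ^ (u 0) : MvPolynomial (Fin 1) ℚ) := by
        rw [MvPolynomial.X_pow_eq_monomial, MvPolynomial.smul_monomial, smul_eq_mul, mul_one]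
        have huu : u = Finsupp.single 0 (u 0) := by
          ext
          simp
        conv_lhs => rw [huu]
      rw [hu, ← TensorProduct.smul_tmul']
      refine Submodule.smul_mem _ _ ?_
      rcases lt_or_ge (u 0) m with hlt | hge
      · refine Submodule.mem_sup_left ⟨Pi.single ⟨u 0, hlt⟩ e, ?_⟩
        rw [hf, Finset.sum_eq_single ⟨u 0, hlt⟩]
        · simp
        · intro b _ hb
          simp [Pi.single_eq_of_ne hb]
        · simp
      · refine Submodule.mem_sup_right ⟨(MvPolynomial.X 0 ^ (u 0 - m)) ⊗ₜ[ℚ] e, ?_⟩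
        rw [LinearMap.mulLeft_apply, tg, Algebra.TensorProduct.tmul_pow,
          Algebra.TensorProduct.tmul_mul_tmul, ← pow_add, one_pow, one_mul,
          Nat.add_sub_cancel' hge]

/-! ### Finiteness criterion -/

/-- A subquotient of a finite-dimensional quotient is finite-dimensional: if `Z ⊓ B ≤ C` and
`A / B` is finite-dimensional, then so is the image of `Z` in `A / C`. -/
lemma finite_map_mkQ_of_inf_le {V : Type*} [AddCommGroup V] [Module ℚ V] (Z B C : Submodule ℚ V)
    [Module.Finite ℚ (V ⧸ B)] (h : Z ⊓ B ≤ C) : Module.Finite ℚ (Z.map C.mkQ) := by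
  let f : Z →ₗ[ℚ] V ⧸ B := B.mkQ ∘ₗ Z.subtype
  let g : Z →ₗ[ℚ] V ⧸ C := C.mkQ ∘ₗ Z.subtype
  have hfg : LinearMap.ker f ≤ LinearMap.ker g := by
    rintro ⟨z, hz⟩ hzf
    simp only [f, g, LinearMap.mem_ker, LinearMap.comp_apply, Submodule.subtype_apply,
      Submodule.mkQ_apply, Submodule.Quotient.mk_eq_zero] at hzf ⊢
    exact h ⟨hz, hzf⟩
  have hfin : Module.Finite ℚ (Z ⧸ LinearMap.ker f) :=
    Module.Finite.equiv f.quotKerEquivRange.symm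
  have hg : Z.map C.mkQ = LinearMap.range ((LinearMap.ker f).liftQ g hfg) := by
    rw [Submodule.range_liftQ, LinearMap.range_comp, Submodule.range_subtype]
  rw [hg]
  infer_instance

end

noncomputable section

local notation "dv" => (![3, 3, 3, 7, 7] : Fin 5 → ℕ)
local notation "t₁" => tg 1 5 0
local notation "v₁" => vg 1 5 0
local notation "v₂" => vg 1 5 1
local notation "v₃" => vg 1 5 2
local notation "v₄" => vg 1 5 3
local notation "v₅" => vg 1 5 4

theorem stmt_5 (D : FGCA 1 5 →ₗ[ℚ] FGCA 1 5)
    (hLeib : IsLeibniz 1 5 dv D)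
    (hdeg : RaisesDegByOne 1 5 dv D)
    (hD0 : D t₁ = (0 : FGCA 1 5))
    (hD1 : D v₁ = (0 : FGCA 1 5))
    (hD2 : D v₂ = (0 : FGCA 1 5))
    (hD3 : D v₃ = (0 : FGCA 1 5))
    (hD4 : D v₄ = v₁ * v₂ * t₁ + t₁ ^ 4)
    (hD5 : D v₅ = v₁ * v₃ * t₁)
    : D ∘ₗ D = 0 ∧ FiniteDimensional ℚ (Cohomology 1 5 D) := by
  have ht : ∀ a, D (t₁ * a) = t₁ * D a := fun a => by
    rw [hLeib 2 _ a (tg_mem_homog 1 5 dv 0), hD0]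
    simp
  have hv1 : ∀ a, D (v₁ * a) = -(v₁ * D a) := fun a => by
    rw [hLeib 3 _ a (vg_mem_homog 1 5 dv 0), hD1, zero_mul, zero_add, Odd.neg_one_pow (by decide)]
    exact neg_one_smul_fgca 1 5 _
  have hv2 : ∀ a, D (v₂ * a) = -(v₂ * D a) := fun a => by
    rw [hLeib 3 _ a (vg_mem_homog 1 5 dv 1), hD2, zero_mul, zero_add, Odd.neg_one_pow (by decide)]
    exact neg_one_smul_fgca 1 5 _
  have hv4 : ∀ a, D (v₄ * a) = (v₁ * v₂ * t₁ + t₁ ^ 4) * a - v₄ * D a := fun a => by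
    rw [hLeib 7 _ a (vg_mem_homog 1 5 dv 3), hD4, sub_eq_add_neg,
      Odd.neg_one_pow (by decide)]
    exact congrArg _ (neg_one_smul_fgca 1 5 _)
  have htpow : ∀ (m : ℕ) (a), D (t₁ ^ m * a) = t₁ ^ m * D a := by
    intro m
    induction m with
    | zero => simp
    | succ m ih =>
      intro a
      rw [pow_succ, mul_assoc, ih, ht, mul_assoc]
  refine ⟨sq_eq_zero hLeib hdeg ?_ ?_, ?_⟩
  · intro i
    rw [Subsingleton.elim i 0, hD0, map_zero]
  · intro j
    have h4 : D (t₁ ^ 4) = 0 := by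
      rw [pow_succ, htpow, hD0, mul_zero]
    fin_cases j
    · change D (D v₁) = 0
      rw [hD1, map_zero]
    · change D (D v₂) = 0
      rw [hD2, map_zero]
    · change D (D v₃) = 0
      rw [hD3, map_zero]
    · change D (D v₄) = 0
      rw [hD4, map_add, h4, mul_assoc, hv1, hv2, hD0]
      simp
    · change D (D v₅) = 0
      rw [hD5, mul_assoc, hv1, hLeib 3 _ _ (vg_mem_homog 1 5 dv 2), hD3, hD0]
      simp
  · have hx : (v₁ * v₂ * t₁ + t₁ ^ 4) * (t₁ ^ 4 - v₁ * v₂ * t₁) = t₁ ^ 8 := by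
      have hxx : (v₁ * v₂ * t₁) * (v₁ * v₂ * t₁) = 0 := by
        rw [tg_comm 1 5 0 (v₁ * v₂), mul_assoc, ← mul_assoc (v₁ * v₂), tg_comm 1 5 0 (v₁ * v₂),
          mul_assoc t₁ (v₁ * v₂), ← mul_assoc (v₁ * v₂) v₁ v₂, vg_mul_vg_mul_self]
        simp
      have hxt : Commute (v₁ * v₂ * t₁) (t₁ ^ 4) :=
        Commute.pow_right (tg_comm 1 5 0 _) 4
      rw [add_mul, mul_sub, mul_sub, hxx, hxt.eq, ← pow_add]
      abel
    -- Multiplication by `t₁⁸` maps cocycles to coboundaries.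
    have hexact : ∀ z, D z = 0 → D (v₄ * ((t₁ ^ 4 - v₁ * v₂ * t₁) * z)) = t₁ ^ 8 * z := by
      intro z hz
      have hc : D ((t₁ ^ 4 - v₁ * v₂ * t₁) * z) = 0 := by
        rw [sub_mul, map_sub, htpow, mul_assoc, mul_assoc, hv1, hv2, ht, hz]
        simp
      rw [hv4, hc, ← mul_assoc, hx, mul_zero, sub_zero]
    have := finite_quotient_tg_pow 5 8
    refine finite_map_mkQ_of_inf_le (LinearMap.ker D)
      (LinearMap.range (LinearMap.mulLeft ℚ (t₁ ^ 8))) _ ?_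
    rintro _ ⟨hz, w, rfl⟩
    rw [SetLike.mem_coe, LinearMap.mem_ker, LinearMap.mulLeft_apply, htpow] at hz
    have hw : D w = 0 := tg_pow_mul_injective 1 5 0 8 (by simpa using hz)
    exact ⟨_, hexact w hw⟩

end
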